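/- Let k > 1/2 be real and ν := (−1 + i·√(4k² − 1))/2. Then as t → 1⁻ (t real), the function t ↦ P_ν(−t) − (sin(νπ)/π)·log(1 − t) converges to the finite limit cos(νπ) − (2/π)·sin(νπ)·( (1/2)·log 2 − γ_EM − Γ′(ν+1)/Γ(ν+1) ), where γ_EM is the Euler–Mascheroni constant and Γ is the complex Gamma function. In particular, P_ν(−t) has a logarithmic singularity as t → 1⁻. -/

import Mathlib

open Polynomial Filter Topology

/-- The Legendre function of the first kind of degree `ν`, defined by its
hypergeometric series. -/
noncomputable def legendreP (ν : ℂ) (z : ℂ) : ℂ :=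
  ∑' n : ℕ, ((ascPochhammer ℂ n).eval (-ν) * (ascPochhammer ℂ n).eval (ν + 1))
      / ((n.factorial : ℂ))^2 * ((1 - z) / 2)^n

/-- The Taylor coefficients at the origin of the hypergeometric function `₂F₁(a, b; 1; ·)`. -/
noncomputable def gaussCoeff (a b : ℂ) (n : ℕ) : ℂ :=
  ∏ j ∈ Finset.range n, ((a + j) * (b + j) / ((j : ℂ) + 1) ^ 2)

/-- The ratio `n! / (y)_n` of a factorial and a rising factorial. -/
noncomputable def factorialRatio (y : ℝ) (n : ℕ) : ℝ :=
  ∏ j ∈ Finset.range n, (((j : ℝ) + 1) / (y + j))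

theorem gaussCoeff_eq_ascPochhammer (a b : ℂ) (n : ℕ) :
    (ascPochhammer ℂ n).eval a * (ascPochhammer ℂ n).eval b / (n.factorial : ℂ) ^ 2 =
      gaussCoeff a b n := by
  induction n with
  | zero => simp [gaussCoeff]
  | succ n ih =>
    have h1 : (n.factorial : ℂ) ≠ 0 := by exact_mod_cast n.factorial_ne_zero
    have h2 : (n : ℂ) + 1 ≠ 0 := by exact_mod_cast n.succ_ne_zero
    rw [gaussCoeff, Finset.prod_range_succ, ← gaussCoeff, ← ih]
    simp only [ascPochhammer_succ_eval, Nat.factorial_succ]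
    push_cast
    field_simp

theorem gaussCoeff_succ (a b : ℂ) (n : ℕ) :
    gaussCoeff a b (n + 1) = gaussCoeff a b n * ((a + n) * (b + n) / ((n : ℂ) + 1) ^ 2) :=
  Finset.prod_range_succ _ _

theorem factorialRatio_succ (y : ℝ) (n : ℕ) :
    factorialRatio y (n + 1) = factorialRatio y n * (((n : ℝ) + 1) / (y + n)) :=
  Finset.prod_range_succ _ _

theorem factorialRatio_one (n : ℕ) : factorialRatio 1 n = 1 := by
  refine Finset.prod_eq_one fun j _ => ?_
  rw [add_comm, div_self (by positivity)]

theorem factorialRatio_pos {y : ℝ} (hy : 0 < y) (n : ℕ) : 0 < factorialRatio y n :=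
  Finset.prod_pos fun j _ => by positivity

theorem factorialRatio_le_one {y : ℝ} (hy : 1 ≤ y) (n : ℕ) : factorialRatio y n ≤ 1 := by
  refine Finset.prod_le_one (fun j _ => by positivity) fun j _ => ?_
  rw [div_le_one (by positivity)]
  linarith

theorem factorialRatio_anti {y z : ℝ} (hy : 0 < y) (h : y ≤ z) (n : ℕ) :
    factorialRatio z n ≤ factorialRatio y n := by
  refine Finset.prod_le_prod (fun j _ => ?_) fun j _ => ?_
  · have : 0 < z := hy.trans_le h
    positivity
  · gcongr

theorem factorialRatio_succ_le {y : ℝ} (hy : 1 ≤ y) (n : ℕ) : factorialRatio y (n + 1) ≤ 1 / y := by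
  have h0 : 0 < y := by linarith
  induction n with
  | zero => simp [factorialRatio]
  | succ n ih =>
    rw [factorialRatio_succ]
    refine (mul_le_of_le_one_right (factorialRatio_pos h0 _).le ?_).trans ih
    push_cast
    rw [div_le_one (by positivity)]
    linarith

theorem factorialRatio_add_one {y : ℝ} (hy : 0 < y) (n : ℕ) :
    factorialRatio (y + 1) n = factorialRatio y n * (y / (y + n)) := by
  induction n with
  | zero => simp [factorialRatio, hy.ne']
  | succ n ih =>
    rw [factorialRatio_succ, factorialRatio_succ, ih]
    push_cast
    have : y + 1 + n ≠ 0 := by positivity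
    field_simp
    ring

theorem continuousAt_factorialRatio_one_add (n : ℕ) :
    ContinuousAt (fun ε : ℝ => factorialRatio (1 + ε) n) 0 := by
  unfold factorialRatio
  refine tendsto_finsetProd _ fun j _ => ?_
  have h : (1 + (0 : ℝ)) + j ≠ 0 := by positivity
  exact ContinuousAt.div (by fun_prop) (by fun_prop) h

theorem tendsto_factorialRatio {y : ℝ} (hy : 1 < y) :
    Tendsto (factorialRatio y) atTop (𝓝 0) := by
  have hy0 : 0 < y := by linarith
  have key : ∀ n : ℕ,
      1 + (y - 1) * ∑ j ∈ Finset.range n, 1 / ((j : ℝ) + 1) ≤ (factorialRatio y n)⁻¹ := by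
    intro n
    induction n with
    | zero => simp [factorialRatio]
    | succ n ih =>
      have hr := factorialRatio_pos hy0 n
      have h1 : 1 ≤ (factorialRatio y n)⁻¹ := (one_le_inv₀ hr).2 (factorialRatio_le_one hy.le n)
      rw [factorialRatio_succ, Finset.sum_range_succ, mul_inv, inv_div]
      have h2 : (y + n) / ((n : ℝ) + 1) = 1 + (y - 1) * (1 / ((n : ℝ) + 1)) := by
        field_simp
        ring
      rw [h2]
      have h3 : 0 ≤ (y - 1) * (1 / ((n : ℝ) + 1)) :=
        mul_nonneg (by linarith) (by positivity)
      nlinarith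
  have h : Tendsto (fun n => (factorialRatio y n)⁻¹) atTop atTop := by
    refine tendsto_atTop_mono key (tendsto_atTop_add_const_left _ _ ?_)
    exact Real.tendsto_sum_range_one_div_nat_succ_atTop.const_mul_atTop (by linarith)
  exact h.inv_tendsto_atTop.congr fun n => inv_inv _

theorem hasSum_factorialRatio_div {ε : ℝ} (hε : 0 < ε) :
    HasSum (fun n : ℕ => factorialRatio (1 + ε) n / (n + 1 + ε)) (1 / ε) := by
  have hy : 0 < 1 + ε := by linarith
  rw [hasSum_iff_tendsto_nat_of_nonneg
    (fun n => div_nonneg (factorialRatio_pos hy n).le (by positivity))]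
  have key : ∀ n : ℕ, ∑ i ∈ Finset.range n, factorialRatio (1 + ε) i / (i + 1 + ε) =
      (1 - factorialRatio (1 + ε) n) / ε := by
    intro n
    induction n with
    | zero => simp [factorialRatio]
    | succ n ih =>
      rw [Finset.sum_range_succ, ih, factorialRatio_succ]
      have h1 : 1 + ε + n ≠ 0 := by positivity
      have h2 : (n : ℝ) + 1 + ε ≠ 0 := by positivity
      field_simp
      ring
  simp_rw [key]
  simpa using ((tendsto_factorialRatio (by linarith : 1 < 1 + ε)).const_sub 1).div_const ε

theorem add_natCast_ne_zero {a : ℂ} (ha : 0 < a.re) (n : ℕ) : a + n ≠ 0 := by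
  intro h
  have := congrArg Complex.re h
  simp at this
  have : (0 : ℝ) ≤ n := n.cast_nonneg
  linarith

theorem natCast_div_add_natCast_tendsto (a : ℂ) :
    Tendsto (fun n : ℕ => (n : ℂ) / (a + n)) atTop (𝓝 1) := by
  simpa [add_comm] using tendsto_natCast_div_add_atTop a

theorem tendsto_natCast_mul_gaussCoeff {a b : ℂ} (hab : a + b = 1) (ha : 0 < a.re)
    (hb : 0 < b.re) :
    Tendsto (fun n : ℕ => n * gaussCoeff a b n) atTop
      (𝓝 (Complex.Gamma a * Complex.Gamma b)⁻¹) := by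
  have h := ((natCast_div_add_natCast_tendsto a).mul (natCast_div_add_natCast_tendsto b)).mul
    (((Complex.GammaSeq_tendsto_Gamma a).mul (Complex.GammaSeq_tendsto_Gamma b)).inv₀
      (mul_ne_zero (Complex.Gamma_ne_zero_of_re_pos ha) (Complex.Gamma_ne_zero_of_re_pos hb)))
  rw [one_mul, one_mul] at h
  refine h.congr' ?_
  filter_upwards [eventually_ne_atTop 0] with n hn
  have hn' : (n : ℂ) ≠ 0 := by exact_mod_cast hn
  have hg : gaussCoeff a b n = (∏ j ∈ Finset.range n, (a + j)) *
      (∏ j ∈ Finset.range n, (b + j)) / (n.factorial : ℂ) ^ 2 := by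
    rw [gaussCoeff, Finset.prod_div_distrib, Finset.prod_mul_distrib, Finset.prod_pow,
      ← Finset.prod_range_add_one_eq_factorial]
    push_cast
    rfl
  have hp : (n : ℂ) ^ a * (n : ℂ) ^ b = n := by
    rw [← Complex.cpow_add _ _ hn', hab, Complex.cpow_one]
  have h1 : (n : ℂ) ^ a ≠ 0 := by simp [Complex.cpow_eq_zero_iff, hn]
  have h2 : (n : ℂ) ^ b ≠ 0 := by simp [Complex.cpow_eq_zero_iff, hn]
  have h3 : (n.factorial : ℂ) ≠ 0 := by exact_mod_cast n.factorial_ne_zero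
  have h4 := add_natCast_ne_zero ha
  have h5 := add_natCast_ne_zero hb
  rw [hg, Complex.GammaSeq, Complex.GammaSeq, Finset.prod_range_succ, Finset.prod_range_succ,
    mul_inv, inv_div, inv_div, div_mul_div_comm, div_mul_div_comm]
  rw [show ((n : ℂ) ^ a * n.factorial * ((n : ℂ) ^ b * n.factorial)) =
    n * (n.factorial : ℂ) ^ 2 by linear_combination (n.factorial : ℂ) ^ 2 * hp]
  have h6 := h4 n
  have h7 := h5 n
  field_simp

theorem exists_norm_gaussCoeff_sub_le {a b : ℂ} (hab : a + b = 1) (ha : 0 < a.re)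
    (hb : 0 < b.re) :
    ∃ C : ℝ, ∀ n : ℕ, ‖gaussCoeff a b n - (Complex.Gamma a * Complex.Gamma b)⁻¹ / (n + 1)‖ ≤
      C * (1 / ((n : ℝ) + 1) ^ 2) := by
  have hlim := tendsto_natCast_mul_gaussCoeff hab ha hb
  set S := (Complex.Gamma a * Complex.Gamma b)⁻¹
  obtain ⟨D, hD⟩ := hlim.norm.bddAbove_range
  replace hD : ∀ n : ℕ, ‖(n : ℂ) * gaussCoeff a b n‖ ≤ D := fun n => hD ⟨n, rfl⟩
  have hD0 : 0 ≤ D := (norm_nonneg _).trans (hD 0)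
  set K := D * ‖a * b‖
  have hK : 0 ≤ K := by positivity
  have hstep : ∀ n : ℕ, 1 ≤ n → ∀ m, n ≤ m →
      ‖(m : ℂ) * gaussCoeff a b m - n * gaussCoeff a b n‖ ≤ K * (1 / n - 1 / m) := by
    intro n hn m hm
    induction m, hm using Nat.le_induction with
    | base => simp
    | succ m hm ih =>
      have hm0 : (m : ℂ) ≠ 0 := by exact_mod_cast (by omega : m ≠ 0)
      have hm1 : (m : ℂ) + 1 ≠ 0 := by exact_mod_cast m.succ_ne_zero
      have hm0' : (m : ℝ) ≠ 0 := by exact_mod_cast (by omega : m ≠ 0)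
      have e : ((m + 1 : ℕ) : ℂ) * gaussCoeff a b (m + 1) - m * gaussCoeff a b m =
          (m * gaussCoeff a b m) * (a * b) * (1 / (m * (m + 1))) := by
        rw [gaussCoeff_succ]
        push_cast
        obtain rfl : b = 1 - a := by rw [← hab]; ring
        field_simp
        ring
      have e2 : ‖(1 / ((m : ℂ) * (m + 1)))‖ = 1 / m - 1 / ((m : ℝ) + 1) := by
        rw [norm_div, norm_mul, norm_one, Complex.norm_natCast,
          (by exact_mod_cast Complex.norm_natCast (m + 1) : ‖(m : ℂ) + 1‖ = (m : ℝ) + 1)]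
        field_simp
        ring
      have h1 : ‖((m + 1 : ℕ) : ℂ) * gaussCoeff a b (m + 1) - m * gaussCoeff a b m‖ ≤
          K * (1 / m - 1 / ((m : ℝ) + 1)) := by
        rw [e, norm_mul, norm_mul, e2]
        have : (0 : ℝ) ≤ 1 / m - 1 / ((m : ℝ) + 1) := e2 ▸ norm_nonneg _
        exact mul_le_mul_of_nonneg_right
          (mul_le_mul_of_nonneg_right (hD m) (norm_nonneg _)) this
      calc _ ≤ _ := norm_sub_le_norm_sub_add_norm_sub _ ((m : ℂ) * gaussCoeff a b m) _
        _ ≤ K * (1 / m - 1 / ((m : ℝ) + 1)) + K * (1 / n - 1 / m) := add_le_add h1 ih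
        _ = _ := by push_cast; ring
  have hrate : ∀ n : ℕ, 1 ≤ n → ‖S - n * gaussCoeff a b n‖ ≤ K / n := by
    intro n hn
    refine le_of_tendsto (hlim.sub_const _).norm ?_
    filter_upwards [eventually_ge_atTop n] with m hm
    refine (hstep n hn m hm).trans ?_
    have : (0 : ℝ) ≤ 1 / m := by positivity
    rw [div_eq_mul_one_div K]
    exact mul_le_mul_of_nonneg_left (by linarith) hK
  refine ⟨‖1 - S‖ + 4 * (K + ‖S‖), fun n => ?_⟩
  rcases Nat.eq_zero_or_pos n with rfl | hn
  · simp [gaussCoeff]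
    positivity
  · have hn0 : (n : ℂ) ≠ 0 := by exact_mod_cast hn.ne'
    have hn1 : (n : ℂ) + 1 ≠ 0 := by exact_mod_cast n.succ_ne_zero
    have hnr : (1 : ℝ) ≤ n := by exact_mod_cast hn
    have e : gaussCoeff a b n - S / (n + 1) =
        -(S - n * gaussCoeff a b n) / n + S / (n * (n + 1)) := by
      field_simp
      ring
    have e1 : ‖(n : ℂ) + 1‖ = (n : ℝ) + 1 := by exact_mod_cast Complex.norm_natCast (n + 1)
    rw [e]
    calc _ ≤ ‖-(S - n * gaussCoeff a b n) / n‖ + ‖S / ((n : ℂ) * (n + 1))‖ := norm_add_le _ _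
      _ = ‖S - n * gaussCoeff a b n‖ / n + ‖S‖ / (n * (n + 1)) := by
        rw [norm_div, norm_neg, norm_div, norm_mul, Complex.norm_natCast, e1]
      _ ≤ (K / n) / n + ‖S‖ / (n * n) := by
        gcongr
        · exact hrate n hn
        · linarith
      _ = (K + ‖S‖) * (1 / n ^ 2) := by field_simp
      _ ≤ (K + ‖S‖) * (4 * (1 / ((n : ℝ) + 1) ^ 2)) := by
        gcongr
        rw [mul_one_div, div_le_div_iff₀ (by positivity) (by positivity)]
        nlinarith
      _ ≤ _ := by
        have : 0 ≤ ‖1 - S‖ * (1 / ((n : ℝ) + 1) ^ 2) := by positivity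
        linarith

/-- The value at `1` of the hypergeometric series `₂F₁(a, b; y; ·)`. -/
noncomputable def hypergeometricAtOne (a b : ℂ) (y : ℝ) : ℂ :=
  ∑' n : ℕ, gaussCoeff a b n * (factorialRatio y n : ℂ)

theorem summable_gaussCoeff_sub {a b : ℂ} (hab : a + b = 1) (ha : 0 < a.re) (hb : 0 < b.re) :
    Summable fun n : ℕ =>
      ‖gaussCoeff a b n - (Complex.Gamma a * Complex.Gamma b)⁻¹ / (n + 1)‖ := by
  obtain ⟨C, hC⟩ := exists_norm_gaussCoeff_sub_le hab ha hb
  refine Summable.of_nonneg_of_le (fun _ => norm_nonneg _) hC (Summable.mul_left _ ?_)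
  have := (summable_nat_add_iff 1).2 (Real.summable_one_div_nat_pow.2 one_lt_two)
  simpa using this

theorem summable_gaussCoeff_mul_factorialRatio {a b : ℂ} (hab : a + b = 1) (ha : 0 < a.re)
    (hb : 0 < b.re) {y : ℝ} (hy : 1 < y) :
    Summable fun n : ℕ => ‖gaussCoeff a b n * (factorialRatio y n : ℂ)‖ := by
  obtain ⟨ε, hε, rfl⟩ : ∃ ε : ℝ, 0 < ε ∧ y = 1 + ε := ⟨y - 1, by linarith, by ring⟩
  set S := (Complex.Gamma a * Complex.Gamma b)⁻¹ with hS
  refine Summable.of_nonneg_of_le (fun _ => norm_nonneg _) (fun n => ?_)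
    ((summable_gaussCoeff_sub hab ha hb).add
      ((hasSum_factorialRatio_div hε).summable.mul_left (‖S‖ * (1 + ε))))
  rw [← hS]
  have hr := factorialRatio_pos (by linarith : 0 < 1 + ε) n
  have e : gaussCoeff a b n * (factorialRatio (1 + ε) n : ℂ) =
      (gaussCoeff a b n - S / (n + 1)) * (factorialRatio (1 + ε) n : ℂ) +
        S / (n + 1) * (factorialRatio (1 + ε) n : ℂ) := by ring
  have e1 : ‖(n : ℂ) + 1‖ = (n : ℝ) + 1 := by exact_mod_cast Complex.norm_natCast (n + 1)
  rw [e]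
  refine (norm_add_le _ _).trans (add_le_add ?_ ?_)
  · rw [norm_mul, Complex.norm_of_nonneg hr.le]
    exact mul_le_of_le_one_right (norm_nonneg _) (factorialRatio_le_one hy.le n)
  · rw [norm_mul, Complex.norm_of_nonneg hr.le, norm_div, e1, mul_assoc, div_mul_eq_mul_div,
      mul_div_assoc]
    refine mul_le_mul_of_nonneg_left ?_ (norm_nonneg _)
    rw [mul_div_assoc', div_le_div_iff₀ (by positivity) (by positivity)]
    have hn : (0 : ℝ) ≤ n := n.cast_nonneg
    nlinarith [mul_nonneg hr.le (mul_nonneg hn hε.le)]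

theorem hypergeometricAtOne_eq_mul_hypergeometricAtOne_add_one {a b : ℂ} (hab : a + b = 1) (ha : 0 < a.re)
    (hb : 0 < b.re) {y : ℝ} (hy : 1 < y) :
    hypergeometricAtOne a b y = (y - a) * (y - b) / (y * (y - 1)) * hypergeometricAtOne a b (y + 1) := by
  have hy0 : 0 < y := by linarith
  have s1 := (summable_gaussCoeff_mul_factorialRatio hab ha hb hy).of_norm.hasSum
  have s2 := (summable_gaussCoeff_mul_factorialRatio hab ha hb
    (by linarith : 1 < y + 1)).of_norm.hasSum
  have h1 := ((s2.mul_left ((y - a) * (y - b))).sub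
    (s1.mul_left ((y : ℂ) * (y - 1)))).tendsto_sum_nat
  set u : ℕ → ℂ := fun n => y * ((n * gaussCoeff a b n) * (factorialRatio y n : ℂ)) with hu
  have hyC : (y : ℂ) ≠ 0 := by exact_mod_cast hy0.ne'
  have hyC1 : (y : ℂ) - 1 ≠ 0 := by
    have : y - 1 ≠ 0 := by linarith
    exact_mod_cast this
  have hdiff : ∀ n : ℕ, (y - a) * (y - b) * (gaussCoeff a b n * (factorialRatio (y + 1) n : ℂ)) -
      y * (y - 1) * (gaussCoeff a b n * (factorialRatio y n : ℂ)) = u (n + 1) - u n := by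
    intro n
    have h2 : (y : ℂ) + n ≠ 0 := by
      have : y + n ≠ 0 := by positivity
      exact_mod_cast this
    have h3 : (n : ℂ) + 1 ≠ 0 := by exact_mod_cast n.succ_ne_zero
    obtain rfl : b = 1 - a := by rw [← hab]; ring
    simp only [hu, factorialRatio_add_one hy0, factorialRatio_succ, gaussCoeff_succ]
    push_cast
    field_simp
    ring
  simp_rw [hdiff, Finset.sum_range_sub] at h1
  have h2 : Tendsto u atTop (𝓝 0) := by
    have := ((tendsto_natCast_mul_gaussCoeff hab ha hb).mul
      ((Complex.continuous_ofReal.tendsto 0).comp (tendsto_factorialRatio hy))).const_mul (y : ℂ)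
    simpa [hu] using this
  have h3 := tendsto_nhds_unique h1 (h2.sub_const _)
  have h4 : u 0 = 0 := by simp [hu]
  rw [h4, sub_zero, sub_eq_zero] at h3
  rw [hypergeometricAtOne, hypergeometricAtOne, div_mul_eq_mul_div, eq_div_iff (mul_ne_zero hyC hyC1), h3]
  ring

theorem hypergeometricAtOne_eq_prod_mul {a b : ℂ} (hab : a + b = 1) (ha : 0 < a.re)
    (hb : 0 < b.re) {y : ℝ} (hy : 1 < y) (N : ℕ) :
    hypergeometricAtOne a b y = ((∏ j ∈ Finset.range N, ((y : ℂ) - a + j)) *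
      (∏ j ∈ Finset.range N, ((y : ℂ) - b + j))) / ((∏ j ∈ Finset.range N, ((y : ℂ) + j)) *
      (∏ j ∈ Finset.range N, ((y : ℂ) - 1 + j))) * hypergeometricAtOne a b (y + N) := by
  induction N with
  | zero => simp
  | succ N ih =>
    have hN : (0 : ℝ) ≤ N := N.cast_nonneg
    rw [ih, hypergeometricAtOne_eq_mul_hypergeometricAtOne_add_one hab ha hb (by linarith : 1 < y + N)]
    simp only [Finset.prod_range_succ]
    push_cast
    rw [← mul_assoc, div_mul_div_comm]
    congr 2
    · ring
    · ring
    · ring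

theorem tendsto_hypergeometricAtOne_add_natCast {a b : ℂ} (hab : a + b = 1) (ha : 0 < a.re)
    (hb : 0 < b.re) {y : ℝ} (hy : 1 < y) :
    Tendsto (fun N : ℕ => hypergeometricAtOne a b (y + N)) atTop (𝓝 1) := by
  have hy0 : 0 < y := by linarith
  have key : Tendsto (fun N : ℕ => hypergeometricAtOne a b (y + N)) atTop
      (𝓝 (∑' n : ℕ, if n = 0 then (1 : ℂ) else 0)) := by
    refine tendsto_tsum_of_dominated_convergence
      (summable_gaussCoeff_mul_factorialRatio hab ha hb hy) (fun n => ?_)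
      (Eventually.of_forall fun N n => ?_)
    · rcases n with _ | n
      · simp [gaussCoeff, factorialRatio]
      · have h0 : Tendsto (fun N : ℕ => factorialRatio (y + N) (n + 1)) atTop (𝓝 0) := by
          refine squeeze_zero (g := fun N : ℕ => 1 / (y + N))
            (fun N => (factorialRatio_pos (by positivity) _).le)
            (fun N => factorialRatio_succ_le ?_ n) ?_
          · have : (0 : ℝ) ≤ N := N.cast_nonneg
            linarith
          · simp_rw [one_div]
            exact (tendsto_atTop_add_const_left _ _ tendsto_natCast_atTop_atTop).inv_tendsto_atTop
        have := ((Complex.continuous_ofReal.tendsto 0).comp h0).const_mul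
          (gaussCoeff a b (n + 1))
        simpa using this
    · have hN : (0 : ℝ) ≤ N := N.cast_nonneg
      rw [norm_mul, norm_mul, Complex.norm_of_nonneg (factorialRatio_pos (by positivity) _).le,
        Complex.norm_of_nonneg (factorialRatio_pos hy0 _).le]
      exact mul_le_mul_of_nonneg_left (factorialRatio_anti hy0 (by linarith) n) (norm_nonneg _)
  simpa using key

/-- Gauss's summation theorem in the case `a + b = 1`. -/
theorem hypergeometricAtOne_eq_Gamma {a b : ℂ} (hab : a + b = 1) (ha : 0 < a.re)
    (hb : 0 < b.re) {y : ℝ} (hy : 1 < y) :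
    hypergeometricAtOne a b y = Complex.Gamma y * Complex.Gamma (y - 1) /
      (Complex.Gamma (y - a) * Complex.Gamma (y - b)) := by
  have hre : a.re + b.re = 1 := by simpa using congrArg Complex.re hab
  have r1 : 0 < ((y : ℂ) - a).re := by simp; linarith
  have r2 : 0 < ((y : ℂ) - b).re := by simp; linarith
  have h := ((((Complex.GammaSeq_tendsto_Gamma (y : ℂ)).mul
    (Complex.GammaSeq_tendsto_Gamma ((y : ℂ) - 1))).div
    ((Complex.GammaSeq_tendsto_Gamma ((y : ℂ) - a)).mul
      (Complex.GammaSeq_tendsto_Gamma ((y : ℂ) - b)))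
    (mul_ne_zero (Complex.Gamma_ne_zero_of_re_pos r1) (Complex.Gamma_ne_zero_of_re_pos r2))).mul
    ((tendsto_hypergeometricAtOne_add_natCast hab ha hb hy).comp (tendsto_add_atTop_nat 1)))
  rw [mul_one] at h
  refine tendsto_nhds_unique (tendsto_const_nhds.congr' ?_) h
  filter_upwards [eventually_ne_atTop 0] with n hn
  rw [hypergeometricAtOne_eq_prod_mul hab ha hb hy (n + 1)]
  have hn' : (n : ℂ) ≠ 0 := by exact_mod_cast hn
  have hp : (n : ℂ) ^ (y : ℂ) * (n : ℂ) ^ ((y : ℂ) - 1) =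
      (n : ℂ) ^ ((y : ℂ) - a) * (n : ℂ) ^ ((y : ℂ) - b) := by
    rw [← Complex.cpow_add _ _ hn', ← Complex.cpow_add _ _ hn']
    congr 1
    linear_combination hab
  have hne : ∀ z : ℂ, (n : ℂ) ^ z ≠ 0 := fun z => by simp [Complex.cpow_eq_zero_iff, hn]
  have h3 : (n.factorial : ℂ) ≠ 0 := by exact_mod_cast n.factorial_ne_zero
  simp only [Function.comp, Pi.div_apply]
  congr 1
  simp only [Complex.GammaSeq]
  rw [div_mul_div_comm, div_mul_div_comm, mul_mul_mul_comm ((n : ℂ) ^ (y : ℂ)),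
    mul_mul_mul_comm ((n : ℂ) ^ ((y : ℂ) - a)), hp, div_div_div_cancel_left']
  · exact mul_ne_zero (mul_ne_zero (hne _) (hne _)) (mul_ne_zero h3 h3)

theorem tendsto_hypergeometricAtOne_sub_div {a b : ℂ} (hab : a + b = 1) (ha : 0 < a.re) (hb : 0 < b.re) :
    Tendsto (fun ε : ℝ => hypergeometricAtOne a b (1 + ε) -
        (Complex.Gamma a * Complex.Gamma b)⁻¹ * (1 / ε : ℝ)) (𝓝[>] 0)
      (𝓝 (∑' n : ℕ, (gaussCoeff a b n -
        (Complex.Gamma a * Complex.Gamma b)⁻¹ / (n + 1)))) := by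
  set S := (Complex.Gamma a * Complex.Gamma b)⁻¹ with hS
  have hpos : ∀ᶠ ε : ℝ in 𝓝[>] 0, 0 < ε := eventually_mem_nhdsWithin
  have hle : ∀ᶠ ε : ℝ in 𝓝[>] 0, ε < 1 :=
    nhdsWithin_le_nhds (Iio_mem_nhds one_pos)
  have key : Tendsto (fun ε : ℝ => ∑' n : ℕ, (factorialRatio (1 + ε) n : ℂ) *
        (gaussCoeff a b n - S / (((n : ℝ) + 1 + ε : ℝ) : ℂ))) (𝓝[>] 0)
      (𝓝 (∑' n : ℕ, (gaussCoeff a b n - S / (n + 1)))) := by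
    have hb1 : Summable fun n : ℕ => 1 / ((n : ℝ) + 1) ^ 2 := by
      simpa using (summable_nat_add_iff 1).2 (Real.summable_one_div_nat_pow.2 one_lt_two)
    refine tendsto_tsum_of_dominated_convergence
      ((summable_gaussCoeff_sub hab ha hb).add (hb1.mul_left ‖S‖)) (fun n => ?_) ?_
    · have h1 : Tendsto (fun ε : ℝ => (factorialRatio (1 + ε) n : ℂ)) (𝓝 0) (𝓝 1) := by
        have := (Complex.continuous_ofReal.tendsto _).comp
          (continuousAt_factorialRatio_one_add n).tendsto
        simpa [Function.comp_def, factorialRatio_one] using this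
      have h2 : ContinuousAt (fun ε : ℝ => S / (((n : ℝ) + 1 + ε : ℝ) : ℂ)) 0 := by
        refine ContinuousAt.div (by fun_prop) (by fun_prop) ?_
        have : (n : ℝ) + 1 + 0 ≠ 0 := by positivity
        exact_mod_cast this
      have h3 := h1.mul ((tendsto_const_nhds (x := gaussCoeff a b n)).sub h2.tendsto)
      simpa using h3.mono_left nhdsWithin_le_nhds
    · filter_upwards [hpos, hle] with ε h0 h1 n
      have hr := factorialRatio_pos (by linarith : 0 < 1 + ε) n
      have hne : ((n : ℂ) + 1) ≠ 0 := by exact_mod_cast n.succ_ne_zero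
      have hne' : (((n : ℝ) + 1 + ε : ℝ) : ℂ) ≠ 0 := by
        have : (n : ℝ) + 1 + ε ≠ 0 := by positivity
        exact_mod_cast this
      rw [norm_mul, Complex.norm_of_nonneg hr.le]
      refine (mul_le_of_le_one_left (norm_nonneg _)
        (factorialRatio_le_one (by linarith) n)).trans ?_
      have e : gaussCoeff a b n - S / (((n : ℝ) + 1 + ε : ℝ) : ℂ) =
          (gaussCoeff a b n - S / (n + 1)) +
            S * ((ε / (((n : ℝ) + 1) * ((n : ℝ) + 1 + ε)) : ℝ) : ℂ) := by
        push_cast at hne' ⊢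
        field_simp
        ring
      rw [e]
      refine (norm_add_le _ _).trans (add_le_add le_rfl ?_)
      rw [norm_mul, Complex.norm_of_nonneg (by positivity)]
      refine mul_le_mul_of_nonneg_left ?_ (norm_nonneg _)
      rw [div_le_div_iff₀ (by positivity) (by positivity)]
      have hn : (0 : ℝ) ≤ n := n.cast_nonneg
      nlinarith [mul_nonneg hn h0.le]
  refine key.congr' ?_
  filter_upwards [hpos] with ε h0
  have s1 := (summable_gaussCoeff_mul_factorialRatio hab ha hb
    (by linarith : 1 < 1 + ε)).of_norm.hasSum
  have s2 := (Complex.hasSum_ofReal.2 (hasSum_factorialRatio_div h0)).mul_left S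
  refine Eq.trans (tsum_congr fun n => ?_) (s1.sub s2).tsum_eq
  push_cast
  ring

theorem differentiableAt_Gamma_of_re_pos {z : ℂ} (hz : 0 < z.re) :
    DifferentiableAt ℂ Complex.Gamma z :=
  Complex.differentiableAt_Gamma z fun m h => by
    have := add_natCast_ne_zero hz m
    rw [h] at this
    simp at this

theorem tsum_gaussCoeff_sub {a b : ℂ} (hab : a + b = 1) (ha : 0 < a.re) (hb : 0 < b.re) :
    ∑' n : ℕ, (gaussCoeff a b n - (Complex.Gamma a * Complex.Gamma b)⁻¹ / (n + 1)) =
      (Complex.Gamma a * Complex.Gamma b)⁻¹ *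
        (-2 * Real.eulerMascheroniConstant - Complex.digamma a - Complex.digamma b) := by
  refine tendsto_nhds_unique (tendsto_hypergeometricAtOne_sub_div hab ha hb) ?_
  have hΓa := Complex.Gamma_ne_zero_of_re_pos ha
  have hΓb := Complex.Gamma_ne_zero_of_re_pos hb
  have hd : ∀ z : ℂ, 0 < z.re →
      HasDerivAt (fun w : ℂ => Complex.Gamma (z + w)) (deriv Complex.Gamma z) 0 := by
    intro z hz
    have h := (differentiableAt_Gamma_of_re_pos hz).hasDerivAt
    rw [← add_zero z] at h
    simpa using h.comp_const_add z 0
  have h1 : HasDerivAt (fun w : ℂ => Complex.Gamma (1 + w))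
      (-(Real.eulerMascheroniConstant : ℂ)) 0 := by
    simpa [Complex.hasDerivAt_Gamma_one.deriv] using hd 1 (by simp)
  have hg := (h1.mul h1).div ((hd a ha).mul (hd b hb))
    (by simpa using mul_ne_zero hΓa hΓb)
  have hg' := hg.comp_ofReal (z := 0)
  have hs := (hasDerivAt_iff_tendsto_slope_zero.1 hg').mono_left
    (nhdsWithin_mono 0 (fun x (hx : 0 < x) => hx.ne'))
  have hval : (Complex.Gamma a * Complex.Gamma b)⁻¹ *
        (-2 * Real.eulerMascheroniConstant - Complex.digamma a - Complex.digamma b) =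
      (((-(Real.eulerMascheroniConstant : ℂ)) * Complex.Gamma (1 + 0) +
        Complex.Gamma (1 + 0) * (-(Real.eulerMascheroniConstant : ℂ))) *
        (Complex.Gamma (a + 0) * Complex.Gamma (b + 0)) -
        (Complex.Gamma (1 + 0) * Complex.Gamma (1 + 0)) *
        (deriv Complex.Gamma a * Complex.Gamma (b + 0) +
          Complex.Gamma (a + 0) * deriv Complex.Gamma b)) /
        (Complex.Gamma (a + 0) * Complex.Gamma (b + 0)) ^ 2 := by
    simp only [add_zero, Complex.Gamma_one, Complex.digamma_def, logDeriv_apply]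
    field_simp
    ring
  rw [hval]
  refine hs.congr' ?_
  filter_upwards [eventually_mem_nhdsWithin] with ε hε
  replace hε : 0 < ε := hε
  have hεC : (ε : ℂ) ≠ 0 := by exact_mod_cast hε.ne'
  have e1 : (1 : ℂ) + ε - a = b + ε := by linear_combination -hab
  have e2 : (1 : ℂ) + ε - b = a + ε := by linear_combination -hab
  have e3 : Complex.Gamma (1 + ε) = ε * Complex.Gamma ε := by
    rw [add_comm, Complex.Gamma_add_one _ hεC]
  rw [hypergeometricAtOne_eq_Gamma hab ha hb (by linarith)]
  simp only [Pi.mul_apply, Pi.div_apply]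
  push_cast
  rw [e1, e2, add_sub_cancel_left]
  simp only [zero_add, add_zero, Complex.Gamma_one, Complex.real_smul]
  push_cast
  rw [e3]
  field_simp

theorem tendsto_tsum_gaussCoeff_add_log {a b : ℂ} (hab : a + b = 1) (ha : 0 < a.re)
    (hb : 0 < b.re) :
    Tendsto (fun x : ℝ => ∑' n : ℕ, gaussCoeff a b n * (x : ℂ) ^ n +
        (Complex.Gamma a * Complex.Gamma b)⁻¹ * (Real.log (1 - x) : ℂ)) (𝓝[<] 1)
      (𝓝 ((Complex.Gamma a * Complex.Gamma b)⁻¹ *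
        (-2 * Real.eulerMascheroniConstant - Complex.digamma a - Complex.digamma b))) := by
  have hsum := summable_gaussCoeff_sub hab ha hb
  rw [← tsum_gaussCoeff_sub hab ha hb]
  set S := (Complex.Gamma a * Complex.Gamma b)⁻¹
  have habel := tendsto_map'_iff.1 (Complex.tendsto_tsum_powerSeries_nhdsWithin_lt
    hsum.of_norm.hasSum.tendsto_sum_nat)
  have hlog : Tendsto (fun x : ℝ => (1 - x) * Real.log (1 - x) * (-1 / x)) (𝓝[<] 1) (𝓝 0) := by
    have h1 : Tendsto (fun x : ℝ => (1 - x) * Real.log (1 - x)) (𝓝 1) (𝓝 0) :=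
      (Real.continuous_mul_log.comp (continuous_const.sub continuous_id)).tendsto' 1 0 (by simp)
    have h2 : Tendsto (fun x : ℝ => -1 / x) (𝓝 1) (𝓝 (-1 / 1)) :=
      tendsto_const_nhds.div tendsto_id one_ne_zero
    simpa using (h1.mul h2).mono_left nhdsWithin_le_nhds
  have h := habel.add (((Complex.continuous_ofReal.tendsto 0).comp hlog).const_mul S)
  simp only [Complex.ofReal_zero, mul_zero, add_zero] at h
  refine h.congr' ?_
  filter_upwards [eventually_mem_nhdsWithin,
    nhdsWithin_le_nhds (Ioi_mem_nhds (zero_lt_one (α := ℝ)))] with x hx1 hx0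
  replace hx1 : x < 1 := hx1
  replace hx0 : 0 < x := hx0
  have hxC : (x : ℂ) ≠ 0 := by exact_mod_cast hx0.ne'
  have s1 : Summable fun n : ℕ => (gaussCoeff a b n - S / (n + 1)) * (x : ℂ) ^ n := by
    refine Summable.of_norm (Summable.of_nonneg_of_le (fun _ => norm_nonneg _) (fun n => ?_) hsum)
    rw [norm_mul, norm_pow, Complex.norm_of_nonneg hx0.le]
    exact mul_le_of_le_one_right (norm_nonneg _) (pow_le_one₀ hx0.le hx1.le)
  have s2 := (Complex.hasSum_ofReal.2 (Real.hasSum_pow_div_log_of_abs_lt_one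
    (by rwa [abs_of_pos hx0] : |x| < 1))).mul_left (S / x)
  have s3 : HasSum (fun n : ℕ => gaussCoeff a b n * (x : ℂ) ^ n)
      (∑' n : ℕ, (gaussCoeff a b n - S / (n + 1)) * (x : ℂ) ^ n +
        S / x * ((-Real.log (1 - x) : ℝ) : ℂ)) := by
    refine (s1.hasSum.add s2).congr_fun ?_
    intro n
    have : (n : ℂ) + 1 ≠ 0 := by exact_mod_cast n.succ_ne_zero
    push_cast
    field_simp
    ring
  rw [s3.tsum_eq]
  simp only [Function.comp]
  push_cast
  field_simp
  ring

theorem inv_Gamma_mul_Gamma_one_sub (z : ℂ) :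
    (Complex.Gamma z * Complex.Gamma (1 - z))⁻¹ = Complex.sin (Real.pi * z) / Real.pi := by
  rw [Complex.Gamma_mul_Gamma_one_sub, inv_div]

theorem inv_Gamma_mul_digamma_sub {a b : ℂ} (hab : a + b = 1) (ha : 0 < a.re) (hb : 0 < b.re) :
    (Complex.Gamma a * Complex.Gamma b)⁻¹ * (Complex.digamma b - Complex.digamma a) =
      Complex.cos (Real.pi * a) := by
  obtain rfl : b = 1 - a := by rw [← hab]; ring
  have hΓa := Complex.Gamma_ne_zero_of_re_pos ha
  have hΓb := Complex.Gamma_ne_zero_of_re_pos hb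
  have h1 := (differentiableAt_Gamma_of_re_pos ha).hasDerivAt
  have h2 := (differentiableAt_Gamma_of_re_pos hb).hasDerivAt.comp_const_sub 1 a
  have h3 := (h1.mul h2).inv (mul_ne_zero hΓa hΓb)
  have h4 : HasDerivAt (fun z : ℂ => Complex.sin (Real.pi * z) / Real.pi)
      (Complex.cos (Real.pi * a)) a := by
    have hpi : (Real.pi : ℂ) ≠ 0 := by exact_mod_cast Real.pi_ne_zero
    have := (((hasDerivAt_id a).const_mul (Real.pi : ℂ)).csin).div_const (Real.pi : ℂ)
    simpa [hpi] using this
  have h5 := h4.unique (h3.congr_of_eventuallyEq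
    (Eventually.of_forall fun z => (inv_Gamma_mul_Gamma_one_sub z).symm))
  rw [h5]
  simp only [Complex.digamma_def, logDeriv_apply, Pi.mul_apply]
  field_simp
  ring

theorem legendreP_log_singularity (k : ℝ) (hk : 1/2 < k) :
    let ν : ℂ := (-1 + Complex.I * Real.sqrt (4*k^2 - 1)) / 2
    Tendsto
      (fun t : ℝ =>
        legendreP ν (-(t : ℂ)) -
          (Complex.sin (ν * Real.pi) / (Real.pi : ℂ)) * ((Real.log (1 - t) : ℝ) : ℂ))
      (nhdsWithin 1 (Set.Iio 1))
      (nhds (Complex.cos (ν * Real.pi) -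
        (2 / (Real.pi : ℂ)) * Complex.sin (ν * Real.pi) *
          (((1/2 : ℝ) * Real.log 2 - Real.eulerMascheroniConstant : ℝ) -
            deriv Complex.Gamma (ν + 1) / Complex.Gamma (ν + 1)))) := by
  intro ν
  have hre : ν.re = -(1 / 2) := by
    simp [ν]
    norm_num
  have ha : 0 < (-ν).re := by rw [Complex.neg_re, hre]; norm_num
  have hb : 0 < (ν + 1).re := by rw [Complex.add_re, hre, Complex.one_re]; norm_num
  have hab : -ν + (ν + 1) = 1 := by ring
  have hpi : (Real.pi : ℂ) ≠ 0 := by exact_mod_cast Real.pi_ne_zero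
  have hS : (Complex.Gamma (-ν) * Complex.Gamma (ν + 1))⁻¹ =
      -(Complex.sin (ν * Real.pi) / Real.pi) := by
    have h := inv_Gamma_mul_Gamma_one_sub (-ν)
    rw [sub_neg_eq_add, add_comm 1 ν] at h
    rw [h, mul_neg, Complex.sin_neg, mul_comm, neg_div]
  have hcos := inv_Gamma_mul_digamma_sub hab ha hb
  rw [mul_neg, Complex.cos_neg, mul_comm (Real.pi : ℂ)] at hcos
  have hx : Tendsto (fun t : ℝ => (1 + t) / 2) (𝓝[<] 1) (𝓝[<] 1) := by
    refine tendsto_nhdsWithin_iff.2 ⟨?_, ?_⟩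
    · exact ((by fun_prop : Continuous fun t : ℝ => (1 + t) / 2).tendsto' 1 1
        (by norm_num)).mono_left nhdsWithin_le_nhds
    · filter_upwards [eventually_mem_nhdsWithin] with t ht
      have : t < 1 := ht
      show (1 + t) / 2 < 1
      linarith
  have h := ((tendsto_tsum_gaussCoeff_add_log hab ha hb).comp hx).add_const
    ((Complex.Gamma (-ν) * Complex.Gamma (ν + 1))⁻¹ * (Real.log 2 : ℂ))
  have hlim : Complex.cos (ν * Real.pi) -
        (2 / (Real.pi : ℂ)) * Complex.sin (ν * Real.pi) *
          (((1/2 : ℝ) * Real.log 2 - Real.eulerMascheroniConstant : ℝ) -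
            deriv Complex.Gamma (ν + 1) / Complex.Gamma (ν + 1)) =
      (Complex.Gamma (-ν) * Complex.Gamma (ν + 1))⁻¹ *
        (-2 * Real.eulerMascheroniConstant - Complex.digamma (-ν) - Complex.digamma (ν + 1)) +
      (Complex.Gamma (-ν) * Complex.Gamma (ν + 1))⁻¹ * (Real.log 2 : ℂ) := by
    rw [← logDeriv_apply, ← Complex.digamma_def, ← hcos, hS]
    push_cast
    ring
  rw [hlim]
  refine h.congr' ?_
  filter_upwards [eventually_mem_nhdsWithin] with t ht
  have ht1 : (1 : ℝ) - t ≠ 0 := (sub_pos.2 ht).ne'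
  have e1 : (1 : ℝ) - (1 + t) / 2 = (1 - t) / 2 := by ring
  have e2 : legendreP ν (-(t : ℂ)) =
      ∑' n : ℕ, gaussCoeff (-ν) (ν + 1) n * (((1 + t) / 2 : ℝ) : ℂ) ^ n := by
    refine tsum_congr fun n => ?_
    rw [gaussCoeff_eq_ascPochhammer, sub_neg_eq_add]
    push_cast
    rfl
  simp only [Function.comp]
  rw [e1, e2, Real.log_div ht1 two_ne_zero, hS]
  push_cast
  ring
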